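/- There exists ε₀ ∈ (0,1), depending only on the dimension d ≥ 1, such that the following holds. Let Λ ⊂ ℤ^d be a finite rectangle, v : Λ → [0,1], ε ∈ (0, ε₀], γ ∈ (0, ε^{20}], ε₁ = ε/3, E ∈ ℝ, and λ ∈ ℝ with |λ − E| ≤ ε₁/2. Let R = { x ∈ Λ : |v_x + 2dγ − E| ≤ ε₁ }, assume ∅ ≠ R ≠ Λ, and let C, D be the corresponding blocks of H with respect to the partition Λ = R ∪ (Λ∖R). Then D − λ·I is invertible and the eigenfunction-generating kernel satisfies, for all x ∈ Λ∖R and y ∈ R: | ( (D − λ)^{−1} C )_{x y} | ≤ γ^{0.9 · |x−y|}. -/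

import Mathlib

noncomputable section

open scoped BigOperators

/-- ℓ¹ distance on `ℤ^d` (natural-number valued). -/
def dist1 {d : ℕ} (x y : Fin d → ℤ) : ℕ := ∑ i, (x i - y i).natAbs

lemma dist1_comm {d : ℕ} (x y : Fin d → ℤ) : dist1 x y = dist1 y x :=
  Finset.sum_congr rfl fun i _ => by rw [← Int.natAbs_neg, neg_sub]

/-- ℓ¹ diameter of a finite subset of `ℤ^d`. -/
def diam1 {d : ℕ} (Λ : Finset (Fin d → ℤ)) : ℕ := (Λ ×ˢ Λ).sup fun p => dist1 p.1 p.2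

/-- `Λ` is a (possibly empty) rectangle: a product of integer intervals. -/
def IsRect {d : ℕ} (Λ : Finset (Fin d → ℤ)) : Prop := ∃ a b : Fin d → ℤ, Λ = Finset.Icc a b

/-- Entry of the Anderson Hamiltonian `H = H₀ - γ J` with potential `v`. -/
def hamEntry (d : ℕ) (γ : ℝ) (v : (Fin d → ℤ) → ℝ) (x y : Fin d → ℤ) : ℝ :=
  (if x = y then 2*d*γ + v x else 0) - γ * (if dist1 x y = 1 then 1 else 0)

/-- The Anderson Hamiltonian restricted to a finite set `X ⊂ ℤ^d`. -/
def hamOn (d : ℕ) (γ : ℝ) (v : (Fin d → ℤ) → ℝ) (X : Finset (Fin d → ℤ)) :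
    Matrix X X ℝ := Matrix.of fun x y => hamEntry d γ v x y

lemma hamOn_isHermitian (d : ℕ) (γ : ℝ) (v : (Fin d → ℤ) → ℝ) (X : Finset (Fin d → ℤ)) :
    (hamOn d γ v X).IsHermitian := by
  ext x y
  simp only [Matrix.conjTranspose_apply, hamOn, Matrix.of_apply, hamEntry, star_trivial]
  rw [dist1_comm]
  by_cases h : (y : Fin d → ℤ) = (x : Fin d → ℤ)
  · rw [if_pos h, if_pos h.symm, h]
  · rw [if_neg h, if_neg (show ¬((x : Fin d → ℤ) = (y : Fin d → ℤ)) from fun hh => h hh.symm)]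

open scoped Classical in
/-- Number of eigenvalues (with multiplicity) of a Hermitian matrix in `[a,b]`. -/
def countEigIn {n : Type*} [Fintype n] [DecidableEq n] {M : Matrix n n ℝ}
    (hM : M.IsHermitian) (a b : ℝ) : ℕ :=
  (Finset.univ.filter fun i => hM.eigenvalues i ∈ Set.Icc a b).card

/-- Expectation with respect to the uniform measure on a finite configuration space. -/
def expect {Ω : Type*} [Fintype Ω] (f : Ω → ℝ) : ℝ := (∑ ω, f ω) / Fintype.card Ω

open scoped Classical in
/-- Probability of an event with respect to the uniform measure on a finite space. -/
def prob {Ω : Type*} [Fintype Ω] (A : Ω → Prop) : ℝ :=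
  ((Finset.univ.filter A).card : ℝ) / Fintype.card Ω

/-- The random potential determined by a configuration `ω : Λ → Fin N`:
the value at `x ∈ Λ` is `ω x / (N-1) ∈ {0, 1/(N-1), …, 1}`. -/
def potential {d : ℕ} (N : ℕ) (Λ : Finset (Fin d → ℤ)) (ω : Λ → Fin N) :
    (Fin d → ℤ) → ℝ := fun x => if h : x ∈ Λ then (ω ⟨x, h⟩ : ℕ) / ((N : ℝ) - 1) else 0


/-- The off-diagonal block of the Hamiltonian between two index sets. -/
def hamBlock (d : ℕ) (γ : ℝ) (v : (Fin d → ℤ) → ℝ)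
    (X Y : Finset (Fin d → ℤ)) : Matrix X Y ℝ :=
  Matrix.of fun x y => hamEntry d γ v x y

lemma aux_dist1_self {d : ℕ} (x : Fin d → ℤ) : dist1 x x = 0 := by simp [dist1]

lemma aux_dist1_triangle {d : ℕ} (x y z : Fin d → ℤ) :
    dist1 x z ≤ dist1 x y + dist1 y z := by
  unfold dist1
  rw [← Finset.sum_add_distrib]
  refine Finset.sum_le_sum fun i _ => ?_
  omega

lemma aux_neighbor {d : ℕ} (x z : Fin d → ℤ) (h : dist1 x z = 1) :
    ∃ p : Fin d × Bool, Function.update x p.1 (x p.1 + if p.2 then 1 else -1) = z := by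
  unfold dist1 at h
  have hne : ∃ i, (x i - z i).natAbs ≠ 0 := by
    by_contra! hc
    simp [hc] at h
  obtain ⟨i, hi⟩ := hne
  rw [← Finset.add_sum_erase _ _ (Finset.mem_univ i)] at h
  have h0 : ∑ j ∈ Finset.univ.erase i, (x j - z j).natAbs = 0 := by omega
  have h1 : (x i - z i).natAbs = 1 := by omega
  have hother : ∀ j, j ≠ i → x j = z j := by
    intro j hj
    have := Finset.sum_eq_zero_iff.mp h0 j (by simp [hj])
    omega
  refine ⟨(i, decide (x i < z i)), ?_⟩
  funext j
  by_cases hj : j = i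
  · subst hj
    simp only [Function.update_self, decide_eq_true_eq]
    split_ifs <;> omega
  · simp only [Function.update_of_ne hj]
    exact hother j hj

lemma aux_card {d : ℕ} (X : Finset (Fin d → ℤ)) (x : Fin d → ℤ) :
    (∑ z : X, (if dist1 x (z : Fin d → ℤ) = 1 then (1 : ℝ) else 0)) ≤ 2 * d := by
  rw [Finset.sum_coe_sort X (fun z => if dist1 x z = 1 then (1 : ℝ) else 0), Finset.sum_boole]
  have hsub : X.filter (fun z => dist1 x z = 1) ⊆
      (Finset.univ : Finset (Fin d × Bool)).image
        (fun p => Function.update x p.1 (x p.1 + if p.2 then 1 else -1)) := by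
    intro z hz
    obtain ⟨p, hp⟩ := aux_neighbor x z (Finset.mem_filter.mp hz).2
    exact Finset.mem_image.mpr ⟨p, Finset.mem_univ _, hp⟩
  have h := (Finset.card_le_card hsub).trans Finset.card_image_le
  simp only [Finset.card_univ, Fintype.card_prod, Fintype.card_fin, Fintype.card_bool] at h
  have h' : (((X.filter (fun z => dist1 x z = 1)).card : ℕ) : ℝ) ≤ ((d * 2 : ℕ) : ℝ) := by
    exact_mod_cast h
  push_cast at h'
  linarith

lemma aux_entry (d : ℕ) (γ lam : ℝ) (v : (Fin d → ℤ) → ℝ) (X : Finset (Fin d → ℤ)) (x z : X) :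
    (hamOn d γ v X - lam • (1 : Matrix X X ℝ)) x z =
      (if x = z then (v x + 2 * d * γ - lam) else 0)
        - γ * (if dist1 (x : Fin d → ℤ) z = 1 then 1 else 0) := by
  simp only [hamOn, hamEntry, Matrix.sub_apply, Matrix.of_apply, Matrix.smul_apply,
    Matrix.one_apply, smul_eq_mul, Subtype.ext_iff]
  split_ifs <;> ring

lemma aux_unit (d : ℕ) (γ lam : ℝ) (hγ : 0 < γ) (v : (Fin d → ℤ) → ℝ) (X : Finset (Fin d → ℤ))
    (hW : ∀ x ∈ X, 2 * d * γ < |v x + 2 * d * γ - lam|) :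
    IsUnit (hamOn d γ v X - lam • (1 : Matrix X X ℝ)) := by
  rw [Matrix.isUnit_iff_isUnit_det, isUnit_iff_ne_zero]
  refine det_ne_zero_of_sum_row_lt_diag fun k => ?_
  have hk : (hamOn d γ v X - lam • (1 : Matrix X X ℝ)) k k = v k + 2 * d * γ - lam := by
    rw [aux_entry]; simp [aux_dist1_self]
  rw [hk, Real.norm_eq_abs]
  refine lt_of_le_of_lt ?_ (hW k k.2)
  calc _ ≤ ∑ z ∈ Finset.univ.erase k, γ * (if dist1 (k : Fin d → ℤ) z = 1 then (1:ℝ) else 0) := by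
        refine Finset.sum_le_sum fun z hz => ?_
        have hkz : k ≠ z := (Finset.ne_of_mem_erase hz).symm
        rw [aux_entry, if_neg hkz, Real.norm_eq_abs, zero_sub, abs_neg]
        refine le_of_eq (abs_of_nonneg ?_)
        split_ifs <;> simp [hγ.le]
    _ ≤ ∑ z : X, γ * (if dist1 (k : Fin d → ℤ) z = 1 then (1:ℝ) else 0) := by
        refine Finset.sum_le_sum_of_subset_of_nonneg (Finset.erase_subset _ _) fun z _ _ => ?_
        split_ifs <;> simp [hγ.le]
    _ ≤ 2 * d * γ := by
        rw [← Finset.mul_sum]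
        nlinarith [aux_card X (k : Fin d → ℤ)]

lemma aux_bound (d : ℕ) (γ lam δ : ℝ) (hγ : 0 < γ) (hγ1 : γ ≤ 1)
    (v : (Fin d → ℤ) → ℝ) (X : Finset (Fin d → ℤ))
    (hδ : γ ^ (0.1 : ℝ) * (2 * d + 1) < δ)
    (hW : ∀ x ∈ X, δ ≤ |v x + 2 * d * γ - lam|) (y : Fin d → ℤ) (hy : y ∉ X) (u : X → ℝ)
    (hu : ∀ x : X, ((hamOn d γ v X - lam • (1 : Matrix X X ℝ)).mulVec u) x = hamEntry d γ v x y)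
    (x : X) : |u x| ≤ γ ^ ((0.9 : ℝ) * ((dist1 (x : Fin d → ℤ) y : ℕ) : ℝ)) := by
  set g : X → ℝ := fun x => γ ^ ((0.9 : ℝ) * ((dist1 (x : Fin d → ℤ) y : ℕ) : ℝ)) with hg
  have hgpos : ∀ x, 0 < g x := fun x => Real.rpow_pos_of_pos hγ _
  obtain ⟨m, -, hm⟩ := Finset.exists_max_image Finset.univ (fun x => |u x| / g x) ⟨x, Finset.mem_univ x⟩
  set M := |u m| / g m with hM
  have hle : ∀ z, |u z| ≤ M * g z := fun z => by
    have := hm z (Finset.mem_univ z)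
    exact (div_le_iff₀ (hgpos z)).mp this
  have hum : |u m| = M * g m := by rw [hM]; field_simp [(hgpos m).ne']
  have hM0 : 0 ≤ M := div_nonneg (abs_nonneg _) (hgpos m).le
  suffices hM1 : M ≤ 1 by
    exact (hle x).trans (mul_le_of_le_one_left (hgpos x).le hM1)
  by_contra! hM1
  set t := γ ^ (0.1 : ℝ) with ht
  have htpos : 0 < t := Real.rpow_pos_of_pos hγ _
  -- neighbours
  have hnb : ∀ z : X, dist1 (m : Fin d → ℤ) z = 1 → γ * g z ≤ t * g m := by
    intro z hz
    have htri : dist1 (m : Fin d → ℤ) y ≤ 1 + dist1 (z : Fin d → ℤ) y := by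
      rw [← hz]; exact aux_dist1_triangle _ _ _
    have htri' : ((dist1 (m : Fin d → ℤ) y : ℕ) : ℝ) ≤ 1 + ((dist1 (z : Fin d → ℤ) y : ℕ) : ℝ) := by
      exact_mod_cast htri
    rw [hg, ht]
    simp only
    rw [← Real.rpow_add hγ]
    nth_rewrite 1 [← Real.rpow_one γ]
    rw [← Real.rpow_add hγ]
    refine Real.rpow_le_rpow_of_exponent_ge hγ hγ1 ?_
    norm_num at *
    linarith
  have hmy : (m : Fin d → ℤ) ≠ y := fun h => hy (h ▸ m.2)
  have hC : |hamEntry d γ v m y| ≤ t * g m := by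
    unfold hamEntry
    rw [if_neg hmy]
    split_ifs with h1
    · rw [hg, ht]
      simp only [h1]
      rw [← Real.rpow_add hγ]
      norm_num
      rw [abs_of_pos hγ]
    · simp only [mul_zero, sub_zero, abs_zero]
      exact (mul_pos htpos (hgpos m)).le
  have heq := hu m
  have hexp : ((hamOn d γ v X - lam • (1 : Matrix X X ℝ)).mulVec u) m
      = (v m + 2 * d * γ - lam) * u m
        - ∑ z : X, γ * (if dist1 (m : Fin d → ℤ) z = 1 then 1 else 0) * u z := by
    simp only [Matrix.mulVec, dotProduct, aux_entry, sub_mul, Finset.sum_sub_distrib, ite_mul,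
      zero_mul, Finset.sum_ite_eq, Finset.mem_univ, if_true]
  rw [hexp] at heq
  have hsum : |∑ z : X, γ * (if dist1 (m : Fin d → ℤ) z = 1 then 1 else 0) * u z|
      ≤ (M * (t * g m)) * (2 * d) := by
    calc _ ≤ ∑ z : X, |γ * (if dist1 (m : Fin d → ℤ) z = 1 then 1 else 0) * u z| :=
          Finset.abs_sum_le_sum_abs _ _
      _ ≤ ∑ z : X, (M * (t * g m)) * (if dist1 (m : Fin d → ℤ) z = 1 then 1 else 0) := by
          refine Finset.sum_le_sum fun z _ => ?_
          split_ifs with h1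
          · rw [mul_one, mul_one, abs_mul, abs_of_pos hγ]
            nlinarith [mul_le_mul_of_nonneg_left (hle z) hγ.le,
              mul_le_mul_of_nonneg_left (hnb z h1) hM0]
          · simp
      _ ≤ _ := by
          rw [← Finset.mul_sum]
          exact mul_le_mul_of_nonneg_left (aux_card X _)
            (mul_nonneg hM0 (mul_pos htpos (hgpos m)).le)
  have hmain : |v m + 2 * d * γ - lam| * |u m| ≤ t * g m + (M * (t * g m)) * (2 * d) := by
    rw [← abs_mul, sub_eq_iff_eq_add.mp heq]
    exact (abs_add_le _ _).trans (add_le_add hC hsum)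
  have h1 : δ * (M * g m) ≤ t * g m + (M * (t * g m)) * (2 * d) := by
    rw [hum] at hmain
    exact (mul_le_mul_of_nonneg_right (hW m m.2) (mul_nonneg hM0 (hgpos m).le)).trans hmain
  have h2 : t * (2 * d + 1) * (M * g m) < δ * (M * g m) :=
    mul_lt_mul_of_pos_right hδ (mul_pos (by linarith) (hgpos m))
  have h3 : t * g m ≤ M * (t * g m) := by nlinarith [mul_pos htpos (hgpos m)]
  nlinarith

/-- **First-step bound on the eigenfunction-generating kernel** (Theorem 2.4 for
`k = 1`): under the same hypotheses as the first-step random-walk bound, `D - λ` is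
invertible and `|((D-λ)⁻¹ C)_{xy}| ≤ γ^{0.9 |x-y|}` for `x ∈ Λ∖R`, `y ∈ R`. -/
theorem first_step_eigenfunction_kernel_bound (d : ℕ) (hd : 1 ≤ d) :
    ∃ ε₀ : ℝ, 0 < ε₀ ∧ ε₀ < 1 ∧
    ∀ Λ : Finset (Fin d → ℤ), IsRect Λ →
    ∀ v : (Fin d → ℤ) → ℝ, (∀ x ∈ Λ, v x ∈ Set.Icc (0:ℝ) 1) →
    ∀ ε γ : ℝ, 0 < ε → ε ≤ ε₀ → 0 < γ → γ ≤ ε ^ (20 : ℕ) →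
    ∀ E lam : ℝ, |lam - E| ≤ (ε/3)/2 →
    ∀ R : Finset (Fin d → ℤ),
      (∀ x, x ∈ R ↔ x ∈ Λ ∧ |v x + 2*d*γ - E| ≤ ε/3) →
      R.Nonempty → R ≠ Λ →
    IsUnit (hamOn d γ v (Λ \ R) - lam • (1 : Matrix ↥(Λ \ R) ↥(Λ \ R) ℝ)) ∧
    ∀ (x : ↥(Λ \ R)) (y : ↥R),
      |((hamOn d γ v (Λ \ R) - lam • (1 : Matrix ↥(Λ \ R) ↥(Λ \ R) ℝ))⁻¹ *
          hamBlock d γ v (Λ \ R) R) x y|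
        ≤ γ ^ ((0.9 : ℝ) * ((dist1 (x : Fin d → ℤ) (y : Fin d → ℤ) : ℕ) : ℝ)) := by
  have hd' : (1 : ℝ) ≤ d := by exact_mod_cast hd
  refine ⟨1 / (12 * d + 12), by positivity, ?_, ?_⟩
  · rw [div_lt_one (by positivity)]; linarith
  intro Λ _ v _ ε γ hε hε0 hγ hγε E lam hlam R hR _ _
  have hε' : ε * (12 * d + 12) ≤ 1 := (le_div_iff₀ (by positivity)).mp hε0
  have hε1 : ε ≤ 1 := by nlinarith
  have hγ1 : γ ≤ 1 := hγε.trans (pow_le_one₀ hε.le hε1)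
  have ht : γ ^ (0.1 : ℝ) ≤ ε ^ 2 := by
    calc γ ^ (0.1 : ℝ) ≤ (ε ^ 20) ^ (0.1 : ℝ) := Real.rpow_le_rpow hγ.le hγε (by norm_num)
      _ = ε ^ 2 := by
        rw [← Real.rpow_natCast, ← Real.rpow_mul hε.le, ← Real.rpow_natCast]
        norm_num
  have hγt : γ ≤ γ ^ (0.1 : ℝ) := by
    nth_rewrite 1 [← Real.rpow_one γ]
    exact Real.rpow_le_rpow_of_exponent_ge hγ hγ1 (by norm_num)
  have hδ : γ ^ (0.1 : ℝ) * (2 * d + 1) < ε / 6 := by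
    have h1 : γ ^ (0.1 : ℝ) * (2 * d + 1) ≤ ε ^ 2 * (2 * d + 1) :=
      mul_le_mul_of_nonneg_right ht (by positivity)
    nlinarith [mul_le_mul_of_nonneg_left hε' hε.le, pow_pos hε 2]
  have hW : ∀ x ∈ Λ \ R, ε / 6 ≤ |v x + 2 * d * γ - lam| := by
    intro x hx
    rw [Finset.mem_sdiff] at hx
    have h1 : ε / 3 < |v x + 2 * d * γ - E| := by
      by_contra! hc
      exact hx.2 ((hR x).mpr ⟨hx.1, hc⟩)
    have h2 := abs_add_le (v x + 2 * d * γ - lam) (lam - E)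
    have h3 : v x + 2 * d * γ - lam + (lam - E) = v x + 2 * d * γ - E := by ring
    rw [h3] at h2
    linarith
  have hunit := aux_unit d γ lam hγ v (Λ \ R) (fun x hx => by
    refine lt_of_lt_of_le ?_ (hW x hx)
    nlinarith)
  refine ⟨hunit, fun x y => ?_⟩
  have hdet := (Matrix.isUnit_iff_isUnit_det _).mp hunit
  refine aux_bound d γ lam (ε / 6) hγ hγ1 v (Λ \ R) hδ hW y
    (fun h => (Finset.mem_sdiff.mp h).2 y.2)
    (fun x => ((hamOn d γ v (Λ \ R) - lam • (1 : Matrix ↥(Λ \ R) ↥(Λ \ R) ℝ))⁻¹ *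
          hamBlock d γ v (Λ \ R) R) x y) (fun z => ?_) x
  have := congrFun (congrFun (Matrix.mul_nonsing_inv_cancel_left _
    (hamBlock d γ v (Λ \ R) R) hdet) z) y
  rw [Matrix.mul_apply] at this
  simpa only [Matrix.mulVec, dotProduct, hamBlock, Matrix.of_apply] using this
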